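/- Let (X,d) be a metric space, T a metrically nonspreading mapping of X into itself, and {x_n} a sequence in X such that the asymptotic center AC({x_n}) equals the singleton {p} for some p ∈ X and d(Tx_n, x_n) → 0 as n → ∞. Then Tp = p. -/

import Mathlib

open Filter

/-!
If `T` is metrically nonspreading and `a = d(Ty, x)`, `b = d(y, x)`, `e = d(Tx, x)`, then the
triangle inequality turns the defining inequality into `2 (a - e)² ≤ a² + (e + b)²`. Completing the
square on the left gives `(a - 2e)² ≤ b² + 2be + 3e² ≤ (b + 2e)²`, that is,
`d(Ty, x) ≤ d(y, x) + 4 d(Tx, x)`. Along an approximate fixed point sequence the error term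
vanishes, so `T` does not increase the asymptotic radius and maps the asymptotic center into itself.
-/

section AsymptoticCenter

variable {X ι : Type*} [PseudoMetricSpace X]

/-- The asymptotic radius `r(u, {xᵢ}) = limsup d(u, xᵢ)` at the point `u` of a family `x` along a
filter `l`, whose minimizers form the asymptotic center. Being a real number, it is `0` when `x` is
unbounded along `l`. -/
noncomputable def asymptoticRadiusAt (l : Filter ι) (x : ι → X) (u : X) : ℝ :=
  limsup (fun i => dist u (x i)) l

/-- The asymptotic center `AC({xᵢ})` of a family `x` along a filter `l`: the points whose asymptotic
radius equals the infimum of the asymptotic radii. -/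
def asymptoticCenter (l : Filter ι) (x : ι → X) : Set X :=
  {u | asymptoticRadiusAt l x u = ⨅ y, asymptoticRadiusAt l x y}

theorem isBoundedUnder_ge_dist (l : Filter ι) (x : ι → X) (u : X) :
    l.IsBoundedUnder (· ≥ ·) fun i => dist u (x i) :=
  isBoundedUnder_of ⟨0, fun _ => dist_nonneg⟩

theorem isBoundedUnder_le_dist_of_isBoundedUnder_le_dist {l : Filter ι} {x : ι → X} {u : X} (v : X)
    (hu : l.IsBoundedUnder (· ≤ ·) fun i => dist u (x i)) :
    l.IsBoundedUnder (· ≤ ·) fun i => dist v (x i) := by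
  obtain ⟨C, hC⟩ := hu
  refine ⟨dist v u + C, ?_⟩
  rw [eventually_map] at hC ⊢
  filter_upwards [hC] with i hi
  exact (dist_triangle v u (x i)).trans (by gcongr)

variable {l : Filter ι} [NeBot l] {x : ι → X}

theorem asymptoticRadiusAt_nonneg (u : X) : 0 ≤ asymptoticRadiusAt l x u := by
  by_cases hu : l.IsBoundedUnder (· ≤ ·) fun i => dist u (x i)
  · exact le_limsup_of_frequently_le (Frequently.of_forall fun _ => dist_nonneg) hu
  · exact (Real.limsup_of_not_isBoundedUnder hu).ge

theorem mem_asymptoticCenter_iff {u : X} :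
    u ∈ asymptoticCenter l x ↔ ∀ y, asymptoticRadiusAt l x u ≤ asymptoticRadiusAt l x y := by
  have : Nonempty X := ⟨u⟩
  have hbdd : BddBelow (Set.range (asymptoticRadiusAt l x)) :=
    ⟨0, Set.forall_mem_range.2 asymptoticRadiusAt_nonneg⟩
  exact ⟨fun hu y => hu.trans_le (ciInf_le hbdd y),
    fun hu => (le_ciInf hu).antisymm (ciInf_le hbdd u)⟩

theorem asymptoticRadiusAt_le_of_dist_le_add {u v : X} {ε : ι → ℝ}
    (hε : Tendsto ε l (nhds 0)) (h : ∀ᶠ i in l, dist u (x i) ≤ dist v (x i) + ε i) :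
    asymptoticRadiusAt l x u ≤ asymptoticRadiusAt l x v := by
  by_cases hu : l.IsBoundedUnder (· ≤ ·) fun i => dist u (x i)
  · have hv := isBoundedUnder_le_dist_of_isBoundedUnder_le_dist v hu
    calc
      limsup (fun i => dist u (x i)) l ≤ limsup ((fun i => dist v (x i)) + ε) l :=
        limsup_le_limsup h (isBoundedUnder_ge_dist l x u).isCoboundedUnder_le
          (isBoundedUnder_le_add hv hε.isBoundedUnder_le)
      _ ≤ limsup (fun i => dist v (x i)) l + limsup ε l :=
        limsup_add_le (isBoundedUnder_ge_dist l x v) hv hε.isCoboundedUnder_le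
          hε.isBoundedUnder_le
      _ = limsup (fun i => dist v (x i)) l := by rw [hε.limsup_eq, add_zero]
  · exact (Real.limsup_of_not_isBoundedUnder hu).trans_le (asymptoticRadiusAt_nonneg v)

end AsymptoticCenter

section Mappings

variable {X : Type*} [PseudoMetricSpace X]

/-- Metrically nonspreading self-mappings of a metric space. -/
def MetricallyNonspreading (T : X → X) : Prop :=
  ∀ x y, 2 * dist (T x) (T y) ^ 2 ≤ dist (T x) y ^ 2 + dist (T y) x ^ 2

/-- Condition `(E_μ)` of García-Falset, Llorens-Fuster and Suzuki, on the whole space and for an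
arbitrary real `μ`: a generalized nonexpansiveness of `T` at approximate fixed points `x`. -/
def SatisfiesConditionE (μ : ℝ) (T : X → X) : Prop :=
  ∀ x y, dist (T y) x ≤ dist y x + μ * dist (T x) x

theorem MetricallyNonspreading.satisfiesConditionE {T : X → X} (hT : MetricallyNonspreading T) :
    SatisfiesConditionE 4 T := by
  intro x y
  set a := dist (T y) x
  set b := dist y x with hb
  set e := dist (T x) x
  have hb₀ : 0 ≤ b := dist_nonneg
  have he₀ : 0 ≤ e := dist_nonneg
  have hTxy : dist (T x) y ≤ e + b := by
    rw [hb, dist_comm y x]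
    exact dist_triangle (T x) x y
  have hsq : 2 * (a - e) ^ 2 ≤ a ^ 2 + (e + b) ^ 2 := calc
    2 * (a - e) ^ 2 = 2 * |a - e| ^ 2 := by rw [sq_abs]
    _ ≤ 2 * dist (T y) (T x) ^ 2 := by gcongr; exact abs_dist_sub_le (T y) (T x) x
    _ ≤ a ^ 2 + dist (T x) y ^ 2 := hT y x
    _ ≤ a ^ 2 + (e + b) ^ 2 := by gcongr
  have hcompleted : (a - 2 * e) ^ 2 ≤ (b + 2 * e) ^ 2 := by
    nlinarith [mul_nonneg hb₀ he₀, sq_nonneg e]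
  have habs : |a - 2 * e| ≤ b + 2 * e := abs_le_of_sq_le_sq hcompleted (by positivity)
  linarith [le_abs_self (a - 2 * e)]

theorem SatisfiesConditionE.mapsTo_asymptoticCenter {ι : Type*} {l : Filter ι} [NeBot l] {μ : ℝ}
    {T : X → X} (hT : SatisfiesConditionE μ T) {x : ι → X}
    (hconv : Tendsto (fun i => dist (T (x i)) (x i)) l (nhds 0)) :
    Set.MapsTo T (asymptoticCenter l x) (asymptoticCenter l x) := by
  intro u hu
  have herror : Tendsto (fun i => μ * dist (T (x i)) (x i)) l (nhds 0) := by
    simpa only [mul_zero] using hconv.const_mul μ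
  have hradius : asymptoticRadiusAt l x (T u) ≤ asymptoticRadiusAt l x u :=
    asymptoticRadiusAt_le_of_dist_le_add herror (.of_forall fun i => hT (x i) u)
  rw [mem_asymptoticCenter_iff] at hu ⊢
  exact fun y => hradius.trans (hu y)

theorem stmt_9_general {ι : Type*} {l : Filter ι} [NeBot l] {μ : ℝ} {T : X → X}
    (hT : SatisfiesConditionE μ T) {x : ι → X} {p : X} (hAC : asymptoticCenter l x = {p})
    (hconv : Tendsto (fun i => dist (T (x i)) (x i)) l (nhds 0)) : T p = p := by
  have hmaps := hT.mapsTo_asymptoticCenter hconv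
  rw [hAC] at hmaps
  exact hmaps rfl

end Mappings

/-- Demiclosed principle: if `T` is metrically nonspreading, the asymptotic center of
`{xₙ}` is `{p}`, and `d(Txₙ, xₙ) → 0`, then `p` is a fixed point of `T`. -/
theorem stmt_9 {X : Type*} [MetricSpace X] (T : X → X)
    (hT : ∀ x y : X, 2 * dist (T x) (T y) ^ 2 ≤ dist (T x) y ^ 2 + dist (T y) x ^ 2)
    (x : ℕ → X) (p : X)
    (hAC : {u : X | limsup (fun n => dist u (x n)) atTop
              = ⨅ y : X, limsup (fun n => dist y (x n)) atTop} = {p})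
    (hconv : Tendsto (fun n => dist (T (x n)) (x n)) atTop (nhds 0)) :
    T p = p :=
  stmt_9_general (MetricallyNonspreading.satisfiesConditionE hT) hAC hconv
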